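/- Let □_q^even (resp. □_q^odd) denote the subalgebra of □_q generated by x₀, x₂ (resp. x₁, x₃). Then (i) there exists an F-algebra isomorphism U⁺_q → □_q^even sending X ↦ x₀ and Y ↦ x₂, and (ii) there exists an F-algebra isomorphism U⁺_q → □_q^odd sending X ↦ x₁ and Y ↦ x₃. -/

import Mathlib

/-! The assignment `X ↦ x₀`, `Y ↦ x₂` respects the `q`-Serre relations, so it defines an algebra
homomorphism `U⁺_q → □_q` whose image is the even subalgebra; the only issue is injectivity.

For this, `□_q` is made to act on the vector space `U⁺_q`. The generators `x₀`, `x₂` act as left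
multiplication by `X`, `Y`, while `x₁`, `x₃` act as the skew derivations `D = skewDer q` and
`D = skewDer q⁻¹`, where `D = skewDer p` is determined by `D 1 = 0` and
`D (X u) = p² X (D u) + (1 - p²) u`, `D (Y u) = p⁻² Y (D u) + (1 - p⁻²) u`.
These formulas are the `q`-Weyl relations of `□_q`. The skew derivation is well defined because it
kills both `q`-Serre expressions already at the level of the free algebra (`serre_skewMat`). The
`q`-Serre expressions in `x₁`, `x₃` act as zero because they kill `1` and commute, up to a power of
`q`, with left multiplication by `X` and `Y` (`qSerre_mul_skew`). Applying an element of the even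
subalgebra to `1 ∈ U⁺_q` then recovers the element of `U⁺_q` it came from.

The odd case follows in the same way, since the relations of `□_q` are invariant under the cyclic
shift of the indices. -/

noncomputable section

/-- The `q`-Serre expression `u³v − [3]_q u²vu + [3]_q uvu² − vu³`,
where `[3]_q = (q³ − q⁻³)/(q − q⁻¹)`. -/
def qSerre {F : Type*} [Field F] (q : F) {A : Type*} [Ring A] [Algebra F A] (u v : A) : A :=
  u ^ 3 * v - ((q ^ 3 - q⁻¹ ^ 3) / (q - q⁻¹)) • (u ^ 2 * v * u)
    + ((q ^ 3 - q⁻¹ ^ 3) / (q - q⁻¹)) • (u * v * u ^ 2) - v * u ^ 3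
/-- The defining relations (`q`-Serre relations) of the positive part of `U_q(sl₂-hat)`. -/
inductive UqPlusRel (F : Type*) [Field F] (q : F) :
    FreeAlgebra F (Fin 2) → FreeAlgebra F (Fin 2) → Prop
  | serreXY : UqPlusRel F q (qSerre q (FreeAlgebra.ι F 0) (FreeAlgebra.ι F 1)) 0
  | serreYX : UqPlusRel F q (qSerre q (FreeAlgebra.ι F 1) (FreeAlgebra.ι F 0)) 0

/-- The positive part `U⁺_q` of `U_q(sl₂-hat)`. -/
abbrev UqPlus (F : Type*) [Field F] (q : F) := RingQuot (UqPlusRel F q)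

/-- The generator `X` of `U⁺_q`. -/
def Xg (F : Type*) [Field F] (q : F) : UqPlus F q :=
  RingQuot.mkAlgHom F (UqPlusRel F q) (FreeAlgebra.ι F 0)

/-- The generator `Y` of `U⁺_q`. -/
def Yg (F : Type*) [Field F] (q : F) : UqPlus F q :=
  RingQuot.mkAlgHom F (UqPlusRel F q) (FreeAlgebra.ι F 1)
/-- The defining relations of the algebra `□_q`. -/
inductive BoxRel (F : Type*) [Field F] (q : F) :
    FreeAlgebra F (ZMod 4) → FreeAlgebra F (ZMod 4) → Prop
  | weyl (i : ZMod 4) : BoxRel F q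
      ((q - q⁻¹)⁻¹ • (q • (FreeAlgebra.ι F i * FreeAlgebra.ι F (i + 1))
        - q⁻¹ • (FreeAlgebra.ι F (i + 1) * FreeAlgebra.ι F i))) 1
  | serre (i : ZMod 4) : BoxRel F q (qSerre q (FreeAlgebra.ι F i) (FreeAlgebra.ι F (i + 2))) 0

/-- The algebra `□_q`. -/
abbrev Box (F : Type*) [Field F] (q : F) := RingQuot (BoxRel F q)

/-- The generators `x_i` of `□_q`. -/
def bx (F : Type*) [Field F] (q : F) (i : ZMod 4) : Box F q :=
  RingQuot.mkAlgHom F (BoxRel F q) (FreeAlgebra.ι F i)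

/-! ### The `q`-Serre expression and skew derivations -/

section Serre

variable {F : Type*} [Field F] {A : Type*} [Ring A] [Algebra F A]

theorem qSerre_inv (q : F) (u v : A) : qSerre q⁻¹ u v = qSerre q u v := by
  have h : (q⁻¹ ^ 3 - q⁻¹⁻¹ ^ 3) / (q⁻¹ - q⁻¹⁻¹) = (q ^ 3 - q⁻¹ ^ 3) / (q - q⁻¹) := by
    rw [inv_inv, ← neg_sub (q ^ 3), ← neg_sub q, neg_div_neg_eq]
  simp only [qSerre, h]

theorem sub_inv_ne_zero {q : F} (hq : q ≠ 0) (hq2 : q ^ 2 ≠ 1) : q - q⁻¹ ≠ 0 := by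
  intro h
  apply hq2
  field_simp at h
  linear_combination h

theorem bracket_three {q : F} (hq : q ≠ 0) (hq2 : q ^ 2 ≠ 1) :
    (q ^ 3 - q⁻¹ ^ 3) / (q - q⁻¹) = q ^ 2 + 1 + q⁻¹ ^ 2 := by
  rw [div_eq_iff (sub_inv_ne_zero hq hq2)]
  field_simp
  ring

theorem map_qSerre {B : Type*} [Ring B] [Algebra F B] (f : A →ₐ[F] B) (q : F) (u v : A) :
    f (qSerre q u v) = qSerre q (f u) (f v) := by
  simp [qSerre]

/-- The lower-order terms produced by moving `w` to the left through the `q`-Serre expression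
cancel, so the expression commutes with `w` up to a scalar. -/
theorem qSerre_mul_skew {q : F} (hq : q ≠ 0) (hq2 : q ^ 2 ≠ 1) {u v w : A}
    (hu : u * w = q ^ 2 • (w * u) + (1 - q ^ 2) • 1)
    (hv : v * w = q⁻¹ ^ 2 • (w * v) + (1 - q⁻¹ ^ 2) • 1) :
    qSerre q u v * w = q ^ 4 • (w * qSerre q u v) := by
  have hu' (z : A) : u * (w * z) = q ^ 2 • (w * (u * z)) + (1 - q ^ 2) • z := by
    rw [← mul_assoc, hu]; simp [add_mul, mul_assoc]
  have hv' (z : A) : v * (w * z) = q⁻¹ ^ 2 • (w * (v * z)) + (1 - q⁻¹ ^ 2) • z := by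
    rw [← mul_assoc, hv]; simp [add_mul, mul_assoc]
  simp only [qSerre, bracket_three hq hq2, pow_succ u, pow_zero, one_mul, mul_assoc, add_mul,
    sub_mul, mul_add, mul_sub, smul_mul_assoc, mul_smul_comm, hu, hv, hu', hv', mul_one, smul_add,
    smul_smul]
  match_scalars <;> field_simp <;> ring

/-- A skew derivation `D`, with `D (a b) = σ a * D b + D a * b` for an endomorphism `σ`, is the same
thing as a multiplicative map `a ↦ !![σ a, D a; 0, a]`. This is the value of that map at a generator
`a` with `σ a = s a` and `D a = 1 - s`. -/
def skewMat (s : F) (a : A) : Matrix (Fin 2) (Fin 2) A :=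
  !![s • a, (1 - s) • 1; 0, a]

/-- The skew derivation with `σ u = q² u`, `σ v = q⁻² v` is compatible with the `q`-Serre relation:
on the diagonal `σ` scales the `q`-Serre expression by `q⁴`, and off the diagonal the skew derivation
annihilates it identically. -/
theorem serre_skewMat {q : F} (hq : q ≠ 0) (hq2 : q ^ 2 ≠ 1) {u v : A} (h : qSerre q u v = 0) :
    qSerre q (skewMat (q ^ 2) u) (skewMat (q⁻¹ ^ 2) v) = 0 := by
  have h' := congrArg (fun z : A => q ^ 4 • z) h
  simp only [smul_zero] at h'
  ext i j
  fin_cases i <;> fin_cases j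
  · rw [Matrix.zero_apply, ← h']
    simp only [qSerre, skewMat, pow_succ, pow_zero, one_mul]
    simp [mul_assoc, smul_smul, add_mul, mul_add, smul_add]
    match_scalars <;> field_simp
  · simp only [qSerre, skewMat, pow_succ, pow_zero, one_mul]
    simp [mul_assoc, smul_smul, add_mul, mul_add, smul_add]
    match_scalars <;> field_simp <;> ring
  · simp [qSerre, skewMat, pow_succ]
  · rw [Matrix.zero_apply, ← h]
    simp only [qSerre, skewMat, pow_succ, pow_zero, one_mul]
    simp [mul_assoc]

end Serre

/-! ### Generation and universal property of `U⁺_q` -/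

section UqPlus

variable {F : Type*} [Field F] {q : F} {A : Type*} [Ring A] [Algebra F A]

theorem serre_Xg_Yg : qSerre q (Xg F q) (Yg F q) = 0 := by
  have := RingQuot.mkAlgHom_rel F (UqPlusRel.serreXY (F := F) (q := q))
  rwa [map_qSerre, map_zero] at this

theorem serre_Yg_Xg : qSerre q (Yg F q) (Xg F q) = 0 := by
  have := RingQuot.mkAlgHom_rel F (UqPlusRel.serreYX (F := F) (q := q))
  rwa [map_qSerre, map_zero] at this

/-- The universal property of `U⁺_q`. -/
def uqLift (u v : A) (h₁ : qSerre q u v = 0) (h₂ : qSerre q v u = 0) : UqPlus F q →ₐ[F] A :=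
  RingQuot.liftAlgHom F ⟨FreeAlgebra.lift F ![u, v], by
    rintro _ _ (_ | _) <;> simpa [map_qSerre]⟩

@[simp]
theorem uqLift_Xg (u v : A) (h₁ : qSerre q u v = 0) (h₂ : qSerre q v u = 0) :
    uqLift u v h₁ h₂ (Xg F q) = u := by
  simp [uqLift, Xg]

@[simp]
theorem uqLift_Yg (u v : A) (h₁ : qSerre q u v = 0) (h₂ : qSerre q v u = 0) :
    uqLift u v h₁ h₂ (Yg F q) = v := by
  simp [uqLift, Yg]

theorem adjoin_Xg_Yg : Algebra.adjoin F {Xg F q, Yg F q} = ⊤ := by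
  have hr : Set.range (FreeAlgebra.ι F : Fin 2 → FreeAlgebra F (Fin 2))
      = {FreeAlgebra.ι F 0, FreeAlgebra.ι F 1} := by
    ext z
    simp [Fin.exists_fin_two, eq_comm]
  have h := congrArg (Subalgebra.map (RingQuot.mkAlgHom F (UqPlusRel F q)))
    (FreeAlgebra.adjoin_range_ι F (Fin 2))
  rw [AlgHom.map_adjoin, hr, Set.image_pair, Algebra.map_top,
    AlgHom.range_eq_top _ |>.2 (RingQuot.mkAlgHom_surjective F _)] at h
  exact h

/-- Induction along left multiplication by the generators: a subspace of `U⁺_q` containing `1` and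
stable under left multiplication by `X` and `Y` is everything, stated for an equalizer. -/
theorem uq_linearMap_ext {M : Type*} [AddCommGroup M] [Module F M] {f g : UqPlus F q →ₗ[F] M}
    (h1 : f 1 = g 1) (hX : ∀ u, f u = g u → f (Xg F q * u) = g (Xg F q * u))
    (hY : ∀ u, f u = g u → f (Yg F q * u) = g (Yg F q * u)) : f = g := by
  have key (a : UqPlus F q) : ∀ u, f u = g u → f (a * u) = g (a * u) := by
    have ha : a ∈ Algebra.adjoin F {Xg F q, Yg F q} := by rw [adjoin_Xg_Yg]; trivial
    induction ha using Algebra.adjoin_induction with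
    | mem x hx =>
      rcases hx with rfl | rfl
      · exact hX
      · exact hY
    | algebraMap r =>
      intro u hu
      rw [← Algebra.smul_def, map_smul, map_smul, hu]
    | add x y _ _ hx hy =>
      intro u hu
      rw [add_mul, map_add, map_add, hx u hu, hy u hu]
    | mul x y _ _ hx hy =>
      intro u hu
      rw [mul_assoc]
      exact hx _ (hy u hu)
  ext a
  simpa using key a 1 h1

end UqPlus

/-! ### Skew derivations of `U⁺_q` -/

section SkewDer

variable {F : Type*} [Field F] {q p : F}

/-- The homomorphism `a ↦ !![σ a, D a; 0, a]`, where `σ X = p² X`, `σ Y = p⁻² Y` and `D` is the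
skew derivation with `D X = 1 - p²`, `D Y = 1 - p⁻²`. -/
def skewHom (hp : p ≠ 0) (hp2 : p ^ 2 ≠ 1) (h : p = q ∨ p = q⁻¹) :
    UqPlus F q →ₐ[F] Matrix (Fin 2) (Fin 2) (UqPlus F q) :=
  uqLift (skewMat (p ^ 2) (Xg F q)) (skewMat (p⁻¹ ^ 2) (Yg F q))
    (by
      have e {A : Type _} [Ring A] [Algebra F A] (u v : A) : qSerre q u v = qSerre p u v := by
        rcases h with rfl | rfl
        · rfl
        · rw [qSerre_inv]
      rw [e]
      exact serre_skewMat hp hp2 (by rw [← e, serre_Xg_Yg]))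
    (by
      have e {A : Type _} [Ring A] [Algebra F A] (u v : A) : qSerre q u v = qSerre p⁻¹ u v := by
        rcases h with rfl | rfl
        · rw [qSerre_inv]
        · rw [inv_inv]
      rw [e]
      have hs := serre_skewMat (inv_ne_zero hp) (by rwa [inv_pow, ne_eq, inv_eq_one])
        (u := Yg F q) (v := Xg F q) (by rw [← e, serre_Yg_Xg])
      rwa [inv_inv] at hs)

theorem skewHom_one_one (hp : p ≠ 0) (hp2 : p ^ 2 ≠ 1) (h : p = q ∨ p = q⁻¹) (u : UqPlus F q) :
    skewHom hp hp2 h u 1 1 = u := by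
  have := uq_linearMap_ext
    (f := (Matrix.entryLinearMap F (UqPlus F q) (1 : Fin 2) (1 : Fin 2)).comp
      (skewHom hp hp2 h).toLinearMap)
    (g := LinearMap.id) (by simp)
    (fun u hu => by
      simp only [LinearMap.comp_apply, AlgHom.toLinearMap_apply, Matrix.entryLinearMap_apply,
        LinearMap.id_apply] at hu ⊢
      rw [map_mul, Matrix.mul_apply, Fin.sum_univ_two, hu]
      simp [skewHom, skewMat])
    (fun u hu => by
      simp only [LinearMap.comp_apply, AlgHom.toLinearMap_apply, Matrix.entryLinearMap_apply,
        LinearMap.id_apply] at hu ⊢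
      rw [map_mul, Matrix.mul_apply, Fin.sum_univ_two, hu]
      simp [skewHom, skewMat])
  exact LinearMap.congr_fun this u

/-- The skew derivation `D` of `U⁺_q` with `D (X u) = p² X (D u) + (1 - p²) u` and
`D (Y u) = p⁻² Y (D u) + (1 - p⁻²) u`, for `p = q` or `p = q⁻¹`. -/
def skewDer (hp : p ≠ 0) (hp2 : p ^ 2 ≠ 1) (h : p = q ∨ p = q⁻¹) :
    Module.End F (UqPlus F q) :=
  (Matrix.entryLinearMap F (UqPlus F q) (0 : Fin 2) (1 : Fin 2)).comp
    (skewHom hp hp2 h).toLinearMap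

theorem skewDer_one (hp : p ≠ 0) (hp2 : p ^ 2 ≠ 1) (h : p = q ∨ p = q⁻¹) :
    skewDer hp hp2 h 1 = 0 := by
  simp [skewDer]

theorem skewDer_mul_X (hp : p ≠ 0) (hp2 : p ^ 2 ≠ 1) (h : p = q ∨ p = q⁻¹) :
    skewDer hp hp2 h * Algebra.lmul F _ (Xg F q)
      = p ^ 2 • (Algebra.lmul F _ (Xg F q) * skewDer hp hp2 h) + (1 - p ^ 2) • 1 := by
  ext u
  simp only [Module.End.mul_apply, skewDer, LinearMap.comp_apply, AlgHom.toLinearMap_apply,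
    Matrix.entryLinearMap_apply, LinearMap.add_apply, LinearMap.smul_apply, Module.End.one_apply,
    Algebra.coe_lmul_eq_mul, LinearMap.mul_apply', map_mul]
  rw [Matrix.mul_apply, Fin.sum_univ_two, skewHom_one_one]
  simp [skewHom, skewMat]

theorem skewDer_mul_Y (hp : p ≠ 0) (hp2 : p ^ 2 ≠ 1) (h : p = q ∨ p = q⁻¹) :
    skewDer hp hp2 h * Algebra.lmul F _ (Yg F q)
      = p⁻¹ ^ 2 • (Algebra.lmul F _ (Yg F q) * skewDer hp hp2 h) + (1 - p⁻¹ ^ 2) • 1 := by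
  ext u
  simp only [Module.End.mul_apply, skewDer, LinearMap.comp_apply, AlgHom.toLinearMap_apply,
    Matrix.entryLinearMap_apply, LinearMap.add_apply, LinearMap.smul_apply, Module.End.one_apply,
    Algebra.coe_lmul_eq_mul, LinearMap.mul_apply', map_mul]
  rw [Matrix.mul_apply, Fin.sum_univ_two, skewHom_one_one]
  simp [skewHom, skewMat]

/-- This turns the commutation relations of `qSerre_mul_skew` into the vanishing of the `q`-Serre
expressions in the skew derivations. -/
theorem end_eq_zero {T : Module.End F (UqPlus F q)} {a b : F} (h1 : T 1 = 0)
    (hX : T * Algebra.lmul F _ (Xg F q) = a • (Algebra.lmul F _ (Xg F q) * T))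
    (hY : T * Algebra.lmul F _ (Yg F q) = b • (Algebra.lmul F _ (Yg F q) * T)) : T = 0 := by
  refine uq_linearMap_ext (by simpa using h1) (fun u hu => ?_) (fun u hu => ?_)
  · simpa [show T u = 0 from hu] using LinearMap.congr_fun hX u
  · simpa [show T u = 0 from hu] using LinearMap.congr_fun hY u

end SkewDer

/-! ### The action of `□_q` on `U⁺_q` -/

section Box

variable {F : Type*} [Field F] {q : F} {A : Type*} [Ring A] [Algebra F A]

/-- The defining relations of `□_q`, for a family of elements of an algebra. -/
def IsBoxFamily (q : F) (f : ZMod 4 → A) : Prop :=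
  (∀ i, (q - q⁻¹)⁻¹ • (q • (f i * f (i + 1)) - q⁻¹ • (f (i + 1) * f i)) = 1) ∧
    ∀ i, qSerre q (f i) (f (i + 2)) = 0

theorem IsBoxFamily.shift {f : ZMod 4 → A} (hf : IsBoxFamily q f) (k : ZMod 4) :
    IsBoxFamily q fun i => f (i + k) :=
  ⟨fun i => by simpa only [add_right_comm] using hf.1 (i + k),
    fun i => by simpa only [add_right_comm] using hf.2 (i + k)⟩

/-- The universal property of `□_q`. -/
theorem IsBoxFamily.exists_lift {f : ZMod 4 → A} (hf : IsBoxFamily q f) :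
    ∃ φ : Box F q →ₐ[F] A, ∀ i, φ (bx F q i) = f i := by
  have h : ∀ ⦃x y⦄, BoxRel F q x y → FreeAlgebra.lift F f x = FreeAlgebra.lift F f y := by
    rintro _ _ (i | i)
    · simpa using hf.1 i
    · simpa [map_qSerre] using hf.2 i
  exact ⟨RingQuot.liftAlgHom F ⟨FreeAlgebra.lift F f, h⟩, fun i => by simp [bx]⟩

theorem serre_bx (i : ZMod 4) : qSerre q (bx F q i) (bx F q (i + 2)) = 0 := by
  have := RingQuot.mkAlgHom_rel F (BoxRel.serre (F := F) (q := q) i)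
  rwa [map_qSerre, map_zero] at this

theorem weyl_of_skew (hq : q ≠ 0) (hq2 : q ^ 2 ≠ 1) {x y : A}
    (h : y * x = q ^ 2 • (x * y) + (1 - q ^ 2) • 1) :
    (q - q⁻¹)⁻¹ • (q • (x * y) - q⁻¹ • (y * x)) = 1 := by
  have := sub_inv_ne_zero hq hq2
  rw [inv_smul_eq_iff₀ this, h]
  match_scalars <;> field_simp <;> ring

theorem weyl_of_skew' (hq : q ≠ 0) (hq2 : q ^ 2 ≠ 1) {x y : A}
    (h : x * y = q⁻¹ ^ 2 • (y * x) + (1 - q⁻¹ ^ 2) • 1) :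
    (q - q⁻¹)⁻¹ • (q • (x * y) - q⁻¹ • (y * x)) = 1 := by
  have := sub_inv_ne_zero hq hq2
  rw [inv_smul_eq_iff₀ this, h]
  match_scalars <;> field_simp <;> ring

/-- The action of `□_q` on `U⁺_q`: left multiplications by `X`, `Y` and the skew derivations with
parameters `q`, `q⁻¹` satisfy the defining relations of `□_q`. -/
theorem exists_boxFamily (hq : q ≠ 0) (hq2 : q ^ 2 ≠ 1) :
    ∃ f : ZMod 4 → Module.End F (UqPlus F q), IsBoxFamily q f ∧
      f 0 = Algebra.lmul F _ (Xg F q) ∧ f 2 = Algebra.lmul F _ (Yg F q) := by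
  have hi : q⁻¹ ≠ 0 := inv_ne_zero hq
  have hi2 : q⁻¹ ^ 2 ≠ 1 := by rwa [inv_pow, ne_eq, inv_eq_one]
  have X1 := skewDer_mul_X hq hq2 (Or.inl rfl : q = q ∨ q = q⁻¹)
  have Y1 := skewDer_mul_Y hq hq2 (Or.inl rfl : q = q ∨ q = q⁻¹)
  have Z1 := skewDer_one hq hq2 (Or.inl rfl : q = q ∨ q = q⁻¹)
  have X3 := skewDer_mul_X hi hi2 (Or.inr rfl : q⁻¹ = q ∨ q⁻¹ = q⁻¹)
  have Y3 := skewDer_mul_Y hi hi2 (Or.inr rfl : q⁻¹ = q ∨ q⁻¹ = q⁻¹)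
  have Z3 := skewDer_one hi hi2 (Or.inr rfl : q⁻¹ = q ∨ q⁻¹ = q⁻¹)
  generalize skewDer hq hq2 _ = d₁ at X1 Y1 Z1
  generalize skewDer hi hi2 _ = d₃ at X3 Y3 Z3
  have S13 : qSerre q d₁ d₃ = 0 := by
    refine end_eq_zero (a := q ^ 4) (b := q⁻¹ ^ 4) (by simp [qSerre, pow_succ, Z1, Z3]) (qSerre_mul_skew hq hq2 X1 X3) ?_
    rw [← qSerre_inv]
    exact qSerre_mul_skew hi hi2 Y1 Y3
  -- With the roles of `d₁`, `d₃` exchanged, `X` and `Y` trade places as well.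
  have S31 : qSerre q d₃ d₁ = 0 := by
    refine end_eq_zero (a := q⁻¹ ^ 4) (b := q ^ 4) (by simp [qSerre, pow_succ, Z1, Z3]) ?_
      (qSerre_mul_skew hq hq2 (by simpa using Y3) Y1)
    rw [← qSerre_inv]
    exact qSerre_mul_skew hi hi2 X3 (by simpa using X1)
  rw [inv_inv] at Y3
  have four : ∀ i : ZMod 4, i = 0 ∨ i = 1 ∨ i = 2 ∨ i = 3 := by decide
  refine ⟨(![Algebra.lmul F _ (Xg F q), d₁, Algebra.lmul F _ (Yg F q), d₃] :
    Fin 4 → Module.End F (UqPlus F q)), ⟨fun i => ?_, fun i => ?_⟩, rfl, rfl⟩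
  · rcases four i with rfl | rfl | rfl | rfl
    · exact weyl_of_skew hq hq2 X1
    · exact weyl_of_skew' hq hq2 Y1
    · exact weyl_of_skew hq hq2 Y3
    · exact weyl_of_skew' hq hq2 X3
  · rcases four i with rfl | rfl | rfl | rfl
    · change qSerre q (Algebra.lmul F _ (Xg F q)) (Algebra.lmul F _ (Yg F q)) = 0
      rw [← map_qSerre, serre_Xg_Yg, map_zero]
    · exact S13
    · change qSerre q (Algebra.lmul F _ (Yg F q)) (Algebra.lmul F _ (Xg F q)) = 0
      rw [← map_qSerre, serre_Yg_Xg, map_zero]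
    · exact S31

/-- Both parts of the theorem at once: `k = 0` is the even case and `k = 1` the odd case. -/
theorem exists_equiv_adjoin (hq : q ≠ 0) (hq2 : q ^ 2 ≠ 1) (k : ZMod 4) :
    ∃ e : UqPlus F q ≃ₐ[F]
        (Algebra.adjoin F {bx F q k, bx F q (k + 2)} : Subalgebra F (Box F q)),
      (e (Xg F q) : Box F q) = bx F q k ∧ (e (Yg F q) : Box F q) = bx F q (k + 2) := by
  obtain ⟨f, hf, h0, h2⟩ := exists_boxFamily (F := F) hq hq2
  obtain ⟨φ, hφ⟩ := (hf.shift (-k)).exists_lift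
  have hk : k + 2 + 2 = k := by
    rw [add_assoc, show (2 + 2 : ZMod 4) = 0 from rfl, add_zero]
  let ψ : UqPlus F q →ₐ[F] Box F q :=
    uqLift (bx F q k) (bx F q (k + 2)) (serre_bx k) (by simpa only [hk] using serre_bx (k + 2))
  have hX : ψ (Xg F q) = bx F q k := uqLift_Xg ..
  have hY : ψ (Yg F q) = bx F q (k + 2) := uqLift_Yg ..
  -- The action of the image of `u` on `U⁺_q` is left multiplication by `u`.
  have hφψ : φ.comp ψ = Algebra.lmul F (UqPlus F q) := by
    refine AlgHom.ext_of_adjoin_eq_top adjoin_Xg_Yg ?_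
    rintro _ (rfl | rfl)
    · rw [AlgHom.comp_apply, hX, hφ, add_neg_cancel, h0]
    · rw [AlgHom.comp_apply, hY, hφ, add_neg_cancel_comm, h2]
  have hinj : Function.Injective ψ := by
    intro u v huv
    have h := congrArg (fun z => φ z 1) huv
    change (φ.comp ψ) u 1 = (φ.comp ψ) v 1 at h
    simpa [hφψ] using h
  have hr : ψ.range = Algebra.adjoin F {bx F q k, bx F q (k + 2)} := by
    rw [← Algebra.map_top, ← adjoin_Xg_Yg, AlgHom.map_adjoin, Set.image_pair, hX, hY]
  exact ⟨(AlgEquiv.ofInjective ψ hinj).trans (Subalgebra.equivOfEq _ _ hr), hX, hY⟩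

end Box

/-- Proposition 5.6(i),(ii): `U⁺_q` is isomorphic to the even and odd subalgebras of `□_q`. -/
theorem stmt2 (F : Type*) [Field F] (q : F) (hq : q ≠ 0) (hq2 : q ^ 2 ≠ 1) :
    (∃ e : UqPlus F q ≃ₐ[F] (Algebra.adjoin F {bx F q 0, bx F q 2} : Subalgebra F (Box F q)),
      (e (Xg F q) : Box F q) = bx F q 0 ∧ (e (Yg F q) : Box F q) = bx F q 2) ∧
    (∃ e : UqPlus F q ≃ₐ[F] (Algebra.adjoin F {bx F q 1, bx F q 3} : Subalgebra F (Box F q)),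
      (e (Xg F q) : Box F q) = bx F q 1 ∧ (e (Yg F q) : Box F q) = bx F q 3) := by
  exact ⟨exists_equiv_adjoin hq hq2 0, exists_equiv_adjoin hq hq2 1⟩
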